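/- For every n ≥ 7, no Condorcet domain on an n-element set is (5,19)-abundant: every Condorcet domain D on an n-element set X (n ≥ 7) has a 5-element subset A ⊆ X such that the restriction of D to A contains at most 18 distinct linear orders. -/

import Mathlib

/-- `r` is a strict total order on `X`, supported on `X` (i.e. `r` never relates
elements outside `X`). -/
def IsLinearOrderOn {α : Type*} (X : Set α) (r : α → α → Prop) : Prop :=
  (∀ a b, r a b → a ∈ X ∧ b ∈ X) ∧
  (∀ a ∈ X, ¬ r a a) ∧
  (∀ a ∈ X, ∀ b ∈ X, ∀ c ∈ X, r a b → r b c → r a c) ∧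
  (∀ a ∈ X, ∀ b ∈ X, a ≠ b → r a b ∨ r b a)

/-- A domain on `X` is a set of linear orders on `X`. -/
def IsDomainOn {α : Type*} (X : Set α) (D : Set (α → α → Prop)) : Prop :=
  ∀ r ∈ D, IsLinearOrderOn X r

/-- The restriction of the order `r` to the subset `A`. -/
def restrictRel {α : Type*} (A : Set α) (r : α → α → Prop) : α → α → Prop :=
  fun a b => a ∈ A ∧ b ∈ A ∧ r a b

/-- The restriction of the domain `D` to the subset `A`: the set of linear orders
on `A` induced by the orders in `D`. -/
def restrictDom {α : Type*} (A : Set α) (D : Set (α → α → Prop)) :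
    Set (α → α → Prop) :=
  restrictRel A '' D

/-- `D` is `(k,s)`-abundant on `X`: its restriction to every `k`-element subset of `X`
contains at least `s` distinct linear orders. -/
def IsAbundant {α : Type*} (X : Set α) (D : Set (α → α → Prop)) (k s : ℕ) : Prop :=
  ∀ A : Set α, A ⊆ X → A.ncard = k → s ≤ (restrictDom A D).ncard

/-- `D` is exactly `(k,s)`-abundant: `(k,s)`-abundant but not `(k,s+1)`-abundant. -/
def IsExactlyAbundant {α : Type*} (X : Set α) (D : Set (α → α → Prop)) (k s : ℕ) : Prop :=
  IsAbundant X D k s ∧ ¬ IsAbundant X D k (s + 1)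

/-- The number of orders in the profile `R` that rank `a` above `b`. -/
noncomputable def majCount {α : Type*} (R : List (α → α → Prop)) (a b : α) : ℕ :=
  Nat.card {i : Fin R.length // (R.get i) a b}

/-- More than half of the orders in the profile `R` rank `a` above `b`. -/
def MajPrefers {α : Type*} (R : List (α → α → Prop)) (a b : α) : Prop :=
  R.length < 2 * majCount R a b

/-- `D` is a Condorcet domain on `X`: it is a domain on `X` and for every profile
(list of orders from `D`) of odd length, the majority relation is transitive on `X`. -/
def IsCondorcetDomain {α : Type*} (X : Set α) (D : Set (α → α → Prop)) : Prop :=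
  IsDomainOn X D ∧
  ∀ R : List (α → α → Prop), (∀ r ∈ R, r ∈ D) → Odd R.length →
    ∀ a ∈ X, ∀ b ∈ X, ∀ c ∈ X,
      MajPrefers R a b → MajPrefers R b c → MajPrefers R a c

/-- A maximal Condorcet domain on `X`. -/
def IsMaximalCondorcetDomain {α : Type*} (X : Set α) (D : Set (α → α → Prop)) : Prop :=
  IsCondorcetDomain X D ∧
  ∀ D' : Set (α → α → Prop), D ⊆ D' → IsCondorcetDomain X D' → D' = D

/-!
In a Condorcet domain no three orders induce on a triple of alternatives the cyclic patterns `abc`,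
`bca`, `cab`, so every triple obeys a never condition: one of its alternatives is never in a certain
position. List seven alternatives in the order of some member of the domain; that member rules out
the never conditions "`x`-th alternative, position `x`", which leaves six for each triple. If the
domain is `(5,19)`-abundant, then the conditions on the ten triples of any five of the alternatives
are obeyed together by at least 19 orders. This holds for only 248 of the `6 ^ 10` assignments of
never conditions, and no assignment to the 35 triples of the seven alternatives restricts to one of
those 248 on each of the 21 five-element subsets. Both searches are by backtracking over bit masks.
-/

section Masks

variable {β : Type*} {w : ℕ}

theorem add_two_pow_mul_and_add_two_pow_mul {a b : ℕ} (ha : a < 2 ^ w) (hb : b < 2 ^ w)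
    (x y : ℕ) : (a + 2 ^ w * x) &&& (b + 2 ^ w * y) = (a &&& b) + 2 ^ w * (x &&& y) := by
  have hab : a &&& b < 2 ^ w := Nat.and_lt_two_pow a hb
  refine Nat.eq_of_testBit_eq fun i => ?_
  simp only [add_comm _ (2 ^ w * _), Nat.testBit_and, Nat.testBit_two_pow_mul_add _ ha,
    Nat.testBit_two_pow_mul_add _ hb, Nat.testBit_two_pow_mul_add _ hab]
  split_ifs <;> rfl

theorem ofDigits_two_pow_and_ofDigits_two_pow {f g : β → ℕ} {l : List β}
    (hf : ∀ b ∈ l, f b < 2 ^ w) (hg : ∀ b ∈ l, g b < 2 ^ w) :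
    Nat.ofDigits (2 ^ w) (l.map f) &&& Nat.ofDigits (2 ^ w) (l.map g) =
      Nat.ofDigits (2 ^ w) (l.map fun b => f b &&& g b) := by
  induction l with
  | nil => simp
  | cons b l ih =>
    rw [List.forall_mem_cons] at hf hg
    simp only [List.map_cons, Nat.ofDigits_cons, ← ih hf.2 hg.2]
    exact add_two_pow_mul_and_add_two_pow_mul hf.1 hg.1 _ _

/-- The set of the entries of `l` satisfying `P`, coded by the number that has one base-`2 ^ w`
digit for each entry of `l`: `1` if the entry satisfies `P`, and `0` otherwise. -/
def mask (w : ℕ) (P : β → Bool) (l : List β) : ℕ :=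
  Nat.ofDigits (2 ^ w) (l.map fun b => (P b).toNat)

theorem mask_and_mask (hw : w ≠ 0) (P Q : β → Bool) (l : List β) :
    mask w P l &&& mask w Q l = mask w (fun b => P b && Q b) l := by
  have hlt (b : Bool) : b.toNat < 2 ^ w := b.toNat_lt.trans_le (Nat.le_self_pow hw 2)
  have htoNat (a b : Bool) : (a && b).toNat = a.toNat &&& b.toNat := by cases a <;> cases b <;> rfl
  simp only [mask, htoNat,
    ofDigits_two_pow_and_ofDigits_two_pow (fun _ _ => hlt _) (fun _ _ => hlt _)]

-- Casting out `2 ^ w - 1`: modulo this number, `2 ^ w` is `1`.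
theorem mask_mod_two_pow_sub_one {l : List β} (hl : l.length < 2 ^ w - 1) (P : β → Bool) :
    mask w P l % (2 ^ w - 1) = l.countP P := by
  have hsum (l : List β) : (l.map fun b => (P b).toNat).sum = l.countP P := by
    induction l with
    | nil => rfl
    | cons b l ih => cases hb : P b <;> simp [hb, ih, add_comm]
  have hbase : 2 ^ w ≡ 1 [MOD 2 ^ w - 1] := Nat.modEq_sub Nat.one_le_two_pow
  calc mask w P l % (2 ^ w - 1)
      = Nat.ofDigits 1 (l.map fun b => (P b).toNat) % (2 ^ w - 1) :=
        Nat.ofDigits_modEq' _ _ _ hbase _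
    _ = l.countP P := by
        rw [Nat.ofDigits_one, hsum, Nat.mod_eq_of_lt (List.countP_le_length.trans_lt hl)]

theorem mask_one_lt (P : β → Bool) (l : List β) : mask 1 P l < 2 ^ l.length := by
  simpa [mask] using Nat.ofDigits_lt_base_pow_length (b := 2) (by norm_num)
    (l := l.map fun b => (P b).toNat) (by simpa using fun b _ => (P b).toNat_lt)

theorem mask_pos {P : β → Bool} {l : List β} (h : ∃ b ∈ l, P b) : 0 < mask w P l := by
  induction l with
  | nil => simp at h
  | cons b l ih =>
    simp only [mask, List.map_cons, Nat.ofDigits_cons]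
    obtain ⟨a, ha, hPa⟩ := h
    rcases List.mem_cons.1 ha with rfl | ha
    · simp [hPa]
    · exact Nat.add_pos_right _ (Nat.mul_pos (by positivity) (ih ⟨a, ha, hPa⟩))

/-- Whether each of the `n` base-`2 ^ (w + 1)` digits of `m` is nonzero, provided that all of them
are below `2 ^ w`. Adding `2 ^ w - 1` to every digit then sets the top bit of exactly the nonzero
ones, so that a constant number of operations tests all digits at once. -/
def noZeroDigit (w n m : ℕ) : Bool :=
  (m + Nat.ofDigits (2 ^ (w + 1)) (List.replicate n (2 ^ w - 1))) &&&
      Nat.ofDigits (2 ^ (w + 1)) (List.replicate n (2 ^ w)) ==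
    Nat.ofDigits (2 ^ (w + 1)) (List.replicate n (2 ^ w))

theorem noZeroDigit_ofDigits {ds : List ℕ} (hds : ∀ d ∈ ds, 0 < d ∧ d < 2 ^ w) :
    noZeroDigit w ds.length (Nat.ofDigits (2 ^ (w + 1)) ds) := by
  induction ds with
  | nil => simp [noZeroDigit]
  | cons d ds ih =>
    rw [List.forall_mem_cons] at hds
    obtain ⟨⟨hpos, hlt⟩, htail⟩ := hds
    have htop : (d + (2 ^ w - 1)) &&& 2 ^ w = 2 ^ w := by
      have : d + (2 ^ w - 1) = 2 ^ w * 1 + (d - 1) := by omega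
      rw [Nat.and_two_pow, this, Nat.testBit_two_pow_mul_add _ (by omega)]
      simp
    simp only [noZeroDigit, List.length_cons, List.replicate_succ, Nat.ofDigits_cons,
      beq_iff_eq] at ih ⊢
    rw [add_add_add_comm, ← mul_add,
      add_two_pow_mul_and_add_two_pow_mul (by omega) (by omega), htop, ih htail]

end Masks

section Search

variable {V L : Type*}

/-- Backtracking search for assignments of `labels` to the listed variables. Assigning `l` to `v`
intersects the mask of remaining candidates with `mask v l`, and a branch is abandoned as soon as
its mask is not `alive`. An assignment is returned as its graph. -/
def assignments (labels : List L) (mask : V → L → ℕ) (alive : ℕ → Bool) :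
    List V → ℕ → List (List (V × L))
  | [], _ => [[]]
  | v :: vs, m =>
    (labels.filter fun l => alive (m &&& mask v l)).flatMap fun l =>
      (assignments labels mask alive vs (m &&& mask v l)).map ((v, l) :: ·)

theorem graph_mem_assignments {β : Type*} {enc : (β → Bool) → ℕ}
    (henc : ∀ P Q, enc P &&& enc Q = enc fun b => P b && Q b) (P : V → L → β → Bool)
    {labels : List L} {alive : ℕ → Bool} {f : V → L} {vs : List V} (hf : ∀ v ∈ vs, f v ∈ labels)
    (Q : β → Bool)
    (halive : ∀ Q' : β → Bool, (∀ b, Q b → (∀ v ∈ vs, P v (f v) b) → Q' b) → alive (enc Q')) :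
    vs.map (fun v => (v, f v)) ∈ assignments labels (fun v l => enc (P v l)) alive vs (enc Q) := by
  induction vs generalizing Q with
  | nil => simp [assignments]
  | cons v vs ih =>
    rw [List.forall_mem_cons] at hf
    have hstep : alive (enc Q &&& enc (P v (f v))) := by
      rw [henc]
      exact halive _ fun b hQ hP => by simp [hQ, hP v]
    simp only [assignments, List.mem_flatMap, List.mem_filter, List.map_cons, List.mem_map]
    refine ⟨f v, ⟨hf.1, hstep⟩, _, ?_, rfl⟩
    rw [henc]
    refine ih hf.2 _ fun Q' hQ' => halive Q' fun b hQ hP => hQ' b ?_ ?_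
    · simp [hQ, hP v]
    · exact fun u hu => hP u (List.mem_cons_of_mem v hu)

end Search

section NeverConditions

variable {ι κ : Type*}

/-- The pair `(x, p)` stands for the condition "the `x`-th alternative of the triple is never in
position `p`" on a triple of alternatives, both counted from `0`: Fishburn's never conditions. -/
abbrev NeverCondition := ℕ × ℕ

/-- Whether the order `r` obeys the never condition `c` on the triple `t`. The position of an
alternative is the number of alternatives of `t` ranked above it. -/
def obeys (r : ι → ι → Bool) (t : List ι) (c : NeverCondition) : Bool :=
  t[c.1]?.all fun x => t.countP (r · x) != c.2

theorem obeys_map (r : κ → κ → Bool) (g : ι → κ) (t : List ι) (c : NeverCondition) :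
    obeys r (t.map g) c = obeys (fun i j => r (g i) (g j)) t c := by
  simp [obeys, List.countP_map, Option.all_map, Function.comp_def]

theorem obeys_congr {r s : ι → ι → Bool} {t : List ι} (h : ∀ i ∈ t, ∀ j ∈ t, r i j = s i j)
    (c : NeverCondition) : obeys r t c = obeys s t c := by
  unfold obeys
  cases hx : t[c.1]? with
  | none => rfl
  | some x =>
    have hcount : t.countP (r · x) = t.countP (s · x) :=
      List.countP_congr fun i hi => by rw [h i hi x (List.mem_of_getElem? hx)]
    simp only [Option.all_some, hcount]

/-- The never conditions that the increasing order of a triple obeys. -/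
def neverConditions : List NeverCondition :=
  (List.range 3 ×ˢ List.range 3).filter fun c => c.1 != c.2

/-- The increasing triples of numbers below `n`. Listing them by their largest entry completes the
small subsets of `{0, …, n - 1}` first, which lets the searches below fail early. -/
def triples (n : ℕ) : List (List ℕ) :=
  (List.range n).flatMap fun k => ((List.range k).sublistsLen 2).map (· ++ [k])

theorem mem_triples {n : ℕ} {t : List ℕ} :
    t ∈ triples n ↔ ∃ i j k, i < j ∧ j < k ∧ k < n ∧ t = [i, j, k] := by
  simp only [triples, List.mem_flatMap, List.mem_range, List.mem_map, List.mem_sublistsLen]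
  constructor
  · rintro ⟨k, hk, l, ⟨hsub, hlen⟩, rfl⟩
    obtain ⟨i, j, rfl⟩ := List.length_eq_two.1 hlen
    have hij : i < j := by simpa using List.pairwise_lt_range.sublist hsub
    have hjk : j < k := List.mem_range.1 (hsub.subset (by simp))
    exact ⟨i, j, k, hij, hjk, hk, rfl⟩
  · rintro ⟨i, j, k, hij, hjk, hk, rfl⟩
    have hperm : List.Subperm [i, j] (List.range k) :=
      List.subperm_of_subset (by simpa using hij.ne) (by simp [hjk, hij.trans hjk])
    exact ⟨k, hk, [i, j], ⟨List.sublist_of_subperm_of_pairwise hperm (by simpa using hij)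
      List.pairwise_lt_range, rfl⟩, rfl⟩

theorem lt_of_mem_triples {n i : ℕ} {t : List ℕ} (ht : t ∈ triples n) (hi : i ∈ t) : i < n := by
  obtain ⟨a, b, c, hab, hbc, hcn, rfl⟩ := mem_triples.1 ht
  simp only [List.mem_cons, List.not_mem_nil, or_false] at hi
  omega

theorem mem_neverConditions_of_obeys {i j k : ℕ} (hij : i < j) (hjk : j < k) {c : NeverCondition}
    (hc : c ∈ List.range 3 ×ˢ List.range 3)
    (hobeys : obeys (fun a b => decide (a < b)) [i, j, k] c) : c ∈ neverConditions := by
  refine List.mem_filter.2 ⟨hc, ?_⟩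
  obtain ⟨x, p⟩ := c
  have hik := hij.trans hjk
  obtain ⟨hx, -⟩ := List.pair_mem_product.1 hc
  rw [List.mem_range] at hx
  interval_cases x <;>
    simpa [obeys, hij, hjk, hik, hij.not_gt, hjk.not_gt, hik.not_gt] using hobeys

theorem getD_lt_of_mem_sublistsLen_range {n k i : ℕ} {A : List ℕ}
    (hA : A ∈ (List.range n).sublistsLen k) (hi : i < k) : A.getD i 0 < n := by
  obtain ⟨hsub, rfl⟩ := List.mem_sublistsLen.1 hA
  rw [List.getD_eq_getElem _ _ hi]
  exact List.mem_range.1 (hsub.subset (List.getElem_mem hi))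

theorem getD_lt_getD_of_mem_sublistsLen_range {n k i j : ℕ} {A : List ℕ}
    (hA : A ∈ (List.range n).sublistsLen k) (hij : i < j) (hj : j < k) :
    A.getD i 0 < A.getD j 0 := by
  obtain ⟨hsub, rfl⟩ := List.mem_sublistsLen.1 hA
  rw [List.getD_eq_getElem _ _ hj, List.getD_eq_getElem _ _ (hij.trans hj)]
  exact List.pairwise_iff_getElem.1 (List.pairwise_lt_range.sublist hsub) i j _ hj hij

theorem map_getD_mem_triples {n k : ℕ} {A s : List ℕ} (hA : A ∈ (List.range n).sublistsLen k)
    (hs : s ∈ triples k) : s.map (A.getD · 0) ∈ triples n := by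
  obtain ⟨i, j, l, hij, hjl, hl, rfl⟩ := mem_triples.1 hs
  exact mem_triples.2 ⟨_, _, _, getD_lt_getD_of_mem_sublistsLen_range hA hij (hjl.trans hl),
    getD_lt_getD_of_mem_sublistsLen_range hA hjl hl, getD_lt_of_mem_sublistsLen_range hA hl, rfl⟩

end NeverConditions

section RichAssignments

variable {n w k : ℕ}

/-- The strict order on indices in which index `i` has position `p[i]`. -/
def positionLT (p : List ℕ) (i j : ℕ) : Bool := (p.getD i 0).blt (p.getD j 0)

/-- The mask of the orders of `n` indices, each given by its list of positions, that obey the never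
condition `c` on the triple `t`. -/
def obeyMask (w n : ℕ) (t : List ℕ) (c : NeverCondition) : ℕ :=
  mask w (fun p => obeys (positionLT p) t c) (List.range n).permutations'

/-- The assignments of never conditions to the triples below `n` that are obeyed by at least `k`
orders, which are counted as long as there are fewer than `2 ^ w - 1` of them. -/
def richAssignments (w n k : ℕ) : List (List (List ℕ × NeverCondition)) :=
  assignments neverConditions (obeyMask w n) (fun m => k.ble (m % (2 ^ w - 1))) (triples n)
    (mask w (fun _ => true) (List.range n).permutations')

theorem graph_mem_richAssignments (hw : n.factorial < 2 ^ w - 1) {f : List ℕ → NeverCondition}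
    (hf : ∀ t ∈ triples n, f t ∈ neverConditions)
    (hk : k ≤ (List.range n).permutations'.countP fun p =>
      (triples n).all fun t => obeys (positionLT p) t (f t)) :
    (triples n).map (fun t => (t, f t)) ∈ richAssignments w n k := by
  have hw₀ : w ≠ 0 := by rintro rfl; simp at hw
  have hlen : (List.range n).permutations'.length < 2 ^ w - 1 := by
    rwa [(List.permutations_perm_permutations' _).symm.length_eq, List.length_permutations,
      List.length_range]
  refine graph_mem_assignments (enc := (mask w · (List.range n).permutations'))
    (mask_and_mask hw₀ · · _) _ hf _ fun Q hQ => ?_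
  rw [mask_mod_two_pow_sub_one hlen, Nat.ble_eq]
  exact hk.trans (List.countP_mono_left fun p _ hp => hQ p rfl (by simpa using hp))

end RichAssignments

section GluedAssignments

variable {γ β : Type*}

/-- Whether the assignment `a` on the triples below `k` gives the label `c` to the triple that the
list `A` of `k` indices sends to `t`. It imposes nothing on a triple `t` not contained in `A`. -/
def permits (k : ℕ) (t : List ℕ) (c : NeverCondition) (A : List ℕ)
    (a : List (List ℕ × NeverCondition)) : Bool :=
  ((triples k).find? fun s => s.map (A.getD · 0) == t).all fun s => a.lookup s == some c

/-- The masks over `S` of the predicates `P A`, one block of bits for each `A` in `As`. A block has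
a spare top bit, as `noZeroDigit` requires. -/
def blockMask (As : List γ) (S : List β) (P : γ → β → Bool) : ℕ :=
  Nat.ofDigits (2 ^ (S.length + 1)) (As.map fun A => mask 1 (P A) S)

/-- The `blockMask` of `permits k t c`. It is not defined as such so that the masks over `S`, of
which there is one for each `s` and `c`, are shared by all `A` and `t`. -/
def permitMask (k : ℕ) (As : List (List ℕ)) (S : List (List (List ℕ × NeverCondition)))
    (t : List ℕ) (c : NeverCondition) : ℕ :=
  Nat.ofDigits (2 ^ (S.length + 1)) (As.map fun A =>
    ((triples k).find? fun s => s.map (A.getD · 0) == t).elim (mask 1 (fun _ => true) S)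
      fun s => mask 1 (fun a => a.lookup s == some c) S)

/-- The assignments of never conditions to the triples below `n` whose restriction to every
`k`-element subset belongs to `S`. -/
def gluedAssignments (n k : ℕ) (S : List (List (List ℕ × NeverCondition))) :
    List (List (List ℕ × NeverCondition)) :=
  assignments neverConditions (permitMask k ((List.range n).sublistsLen k) S)
    (noZeroDigit S.length ((List.range n).sublistsLen k).length) (triples n)
    (blockMask ((List.range n).sublistsLen k) S fun _ _ => true)

theorem blockMask_and_blockMask (As : List γ) (S : List β) (P Q : γ → β → Bool) :
    blockMask As S P &&& blockMask As S Q = blockMask As S fun A b => P A b && Q A b := by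
  have hlt (P : γ → β → Bool) (A : γ) : mask 1 (P A) S < 2 ^ (S.length + 1) :=
    (mask_one_lt _ _).trans (Nat.pow_lt_pow_succ one_lt_two)
  simp only [blockMask, mask_and_mask one_ne_zero,
    ofDigits_two_pow_and_ofDigits_two_pow (fun A _ => hlt P A) (fun A _ => hlt Q A)]

theorem noZeroDigit_blockMask {As : List γ} {S : List β} {P : γ → β → Bool}
    (h : ∀ A ∈ As, ∃ b ∈ S, P A b) : noZeroDigit S.length As.length (blockMask As S P) := by
  simpa only [blockMask, List.length_map] using noZeroDigit_ofDigits
    (ds := As.map fun A => mask 1 (P A) S)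
    (List.forall_mem_map.2 fun A hA => ⟨mask_pos (h A hA), mask_one_lt _ _⟩)

theorem permitMask_eq_blockMask (k : ℕ) (As : List (List ℕ))
    (S : List (List (List ℕ × NeverCondition))) (t : List ℕ) (c : NeverCondition) :
    permitMask k As S t c = blockMask As S (permits k t c) := by
  unfold permitMask blockMask permits
  congr! 3 with A
  cases (triples k).find? fun s => s.map (A.getD · 0) == t <;> rfl

theorem permits_graph (k : ℕ) (f : List ℕ → NeverCondition) (t A : List ℕ) :
    permits k t (f t) A ((triples k).map fun s => (s, f (s.map (A.getD · 0)))) := by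
  unfold permits
  cases hs : (triples k).find? fun s => s.map (A.getD · 0) == t with
  | none => rfl
  | some s =>
    have hst : s.map (A.getD · 0) = t := by simpa using List.find?_some hs
    rw [Option.all_some, List.lookup_graph _ (List.mem_of_find?_eq_some hs), hst, beq_self_eq_true]

theorem graph_mem_gluedAssignments {n k : ℕ} {S : List (List (List ℕ × NeverCondition))}
    {f : List ℕ → NeverCondition} (hf : ∀ t ∈ triples n, f t ∈ neverConditions)
    (hS : ∀ A ∈ (List.range n).sublistsLen k,
      (triples k).map (fun s => (s, f (s.map (A.getD · 0)))) ∈ S) :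
    (triples n).map (fun t => (t, f t)) ∈ gluedAssignments n k S := by
  simp only [gluedAssignments, funext₂ (permitMask_eq_blockMask k _ S)]
  refine graph_mem_assignments (β := List ℕ × List (List ℕ × NeverCondition))
    (enc := fun Q => blockMask _ S fun A a => Q (A, a)) (fun _ _ => blockMask_and_blockMask ..)
    (fun t c b => permits k t c b.1 b.2) hf (fun _ => true) fun Q hQ => ?_
  exact noZeroDigit_blockMask fun A hA =>
    ⟨_, hS A hA, hQ (A, _) rfl fun t _ => permits_graph k f t A⟩

theorem gluedAssignments_seven_five_eq_nil :
    gluedAssignments 7 5 (richAssignments 7 5 19) = [] := by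
  decide +kernel

end GluedAssignments

section LinearOrders

variable {α : Type*} {X : Set α} {r : α → α → Prop} {a b c : α} {n : ℕ}

namespace IsLinearOrderOn

protected theorem irrefl (hr : IsLinearOrderOn X r) : ¬ r a a := fun h => hr.2.1 a (hr.1 a a h).1 h

protected theorem trans (hr : IsLinearOrderOn X r) (hab : r a b) (hbc : r b c) : r a c :=
  hr.2.2.1 a (hr.1 a b hab).1 b (hr.1 a b hab).2 c (hr.1 b c hbc).2 hab hbc

protected theorem asymm (hr : IsLinearOrderOn X r) (hab : r a b) : ¬ r b a :=
  fun hba => hr.irrefl (hr.trans hab hba)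

theorem swap_iff_not (hr : IsLinearOrderOn X r) (ha : a ∈ X) (hb : b ∈ X) (hab : a ≠ b) :
    r b a ↔ ¬ r a b :=
  ⟨hr.asymm, (hr.2.2.2 a ha b hb hab).resolve_left⟩

theorem isStrictTotalOrder_coe (hr : IsLinearOrderOn X r) {Y : Set α} (hYX : Y ⊆ X) :
    IsStrictTotalOrder Y fun a b => r a b where
  irrefl _ := hr.irrefl
  trans _ _ _ := hr.trans
  trichotomous a b hab hba := by
    by_contra hne
    exact (hr.2.2.2 a (hYX a.2) b (hYX b.2) (Subtype.coe_ne_coe.2 hne)).elim hab hba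

theorem exists_fin_equiv (hr : IsLinearOrderOn X r) {Y : Set α} (hYX : Y ⊆ X)
    (hY : Y.encard = n) : ∃ φ : Fin n ≃ Y, ∀ i j, i < j ↔ r (φ i) (φ j) := by
  classical
  have := (Set.finite_of_encard_eq_coe hY).fintype
  have := hr.isStrictTotalOrder_coe hYX
  let : LinearOrder Y := linearOrderOfSTO fun y z : Y => r y z
  have hcard : Fintype.card Y = n := by
    rw [← Nat.card_eq_fintype_card, Nat.card_coe_set_eq, Set.ncard, hY, ENat.toNat_natCast]
  let φ := Fintype.orderIsoFinOfCardEq Y hcard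
  exact ⟨φ.toEquiv, fun i j => φ.lt_iff_lt.symm⟩

theorem exists_increasing [NeZero n] (hr : IsLinearOrderOn X r) (hn : n ≤ X.encard) :
    ∃ e : ℕ → α, (∀ i < n, e i ∈ X) ∧ ∀ i j, i < j → j < n → r (e i) (e j) := by
  obtain ⟨Y, hYX, hY⟩ := Set.exists_subset_encard_eq hn
  obtain ⟨φ, hφ⟩ := hr.exists_fin_equiv hYX hY
  refine ⟨fun i => φ (Fin.ofNat n i), fun i _ => hYX (φ _).2, fun i j hij hj => (hφ _ _).1 ?_⟩
  simpa [Fin.lt_def, Nat.mod_eq_of_lt hj, Nat.mod_eq_of_lt (hij.trans hj)] using hij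

theorem rel_iff_lt_of_increasing (hr : IsLinearOrderOn X r) {e : ℕ → α}
    (he : ∀ i j, i < j → j < n → r (e i) (e j)) {i j : ℕ} (hi : i < n) (hj : j < n) :
    r (e i) (e j) ↔ i < j := by
  refine ⟨fun h => ?_, fun hij => he i j hij hj⟩
  rcases lt_trichotomy i j with hlt | rfl | hgt
  · exact hlt
  · exact absurd h hr.irrefl
  · exact absurd h (hr.asymm (he j i hgt hi))

theorem injOn_of_increasing (hr : IsLinearOrderOn X r) {e : ℕ → α}
    (he : ∀ i j, i < j → j < n → r (e i) (e j)) : Set.InjOn e (Set.Iio n) := by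
  intro i hi j hj hij
  rcases lt_trichotomy i j with hlt | heq | hgt
  · exact absurd (hij ▸ he i j hlt hj) hr.irrefl
  · exact heq
  · exact absurd (hij ▸ he j i hgt hi) hr.irrefl

theorem exists_positions (hr : IsLinearOrderOn X r) {h : ℕ → α} (hX : Set.MapsTo h (Set.Iio n) X)
    (hinj : Set.InjOn h (Set.Iio n)) :
    ∃ p ∈ (List.range n).permutations',
      ∀ i < n, ∀ j < n, (positionLT p i j ↔ r (h i) (h j)) := by
  have hcard : (h '' Set.Iio n).encard = n := by
    rw [hinj.encard_image, ← Finset.coe_Iio, Set.encard_coe_eq_coe_finsetCard, Nat.card_Iio]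
  obtain ⟨φ, hφ⟩ := hr.exists_fin_equiv hX.image_subset hcard
  let σ : Equiv.Perm (Fin n) :=
    (Fin.equivSubtype.trans (Equiv.Set.imageOfInjOn h (Set.Iio n) hinj)).trans φ.symm
  refine ⟨List.ofFn fun i => (σ i : ℕ), ?_, fun i hi j hj => ?_⟩
  · rw [List.mem_permutations']
    have hrange : List.ofFn (Fin.val : Fin n → ℕ) = List.range n := by
      rw [List.ofFn_eq_map, List.map_coe_finRange_eq_range]
    exact hrange ▸ σ.ofFn_comp_perm Fin.val
  · have hget (i) (hi : i < n) : (List.ofFn fun i => (σ i : ℕ)).getD i 0 = σ ⟨i, hi⟩ := by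
      simp [hi]
    have hσ (i) (hi : i < n) : (φ (σ ⟨i, hi⟩) : α) = h i :=
      congrArg Subtype.val (φ.apply_symm_apply _)
    simp only [positionLT, hget i hi, hget j hj, Nat.blt_eq, ← hσ i hi, ← hσ j hj, ← hφ,
      Fin.lt_def]

end IsLinearOrderOn

theorem ncard_restrictDom_le_countP {D : Set (α → α → Prop)} {h : ℕ → α} {P : List ℕ → Bool}
    (hP : ∀ r ∈ D, ∃ p ∈ (List.range n).permutations', P p ∧
      ∀ i < n, ∀ j < n, (positionLT p i j ↔ r (h i) (h j))) :
    (restrictDom (h '' Set.Iio n) D).ncard ≤ (List.range n).permutations'.countP P := by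
  classical
  let decode (p : List ℕ) (a b : α) : Prop :=
    ∃ i < n, ∃ j < n, h i = a ∧ h j = b ∧ positionLT p i j
  let goodLists := ((List.range n).permutations'.filter P).toFinset
  have hsub : restrictDom (h '' Set.Iio n) D ⊆ decode '' goodLists := by
    rintro _ ⟨r, hr, rfl⟩
    obtain ⟨p, hp, hPp, hpr⟩ := hP r hr
    refine ⟨p, List.mem_toFinset.2 (List.mem_filter.2 ⟨hp, hPp⟩), ?_⟩
    ext a b
    constructor
    · rintro ⟨i, hi, j, hj, rfl, rfl, hij⟩
      exact ⟨⟨i, hi, rfl⟩, ⟨j, hj, rfl⟩, (hpr i hi j hj).1 hij⟩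
    · rintro ⟨⟨i, hi, rfl⟩, ⟨j, hj, rfl⟩, hij⟩
      exact ⟨i, hi, j, hj, rfl, rfl, (hpr i hi j hj).2 hij⟩
  calc (restrictDom (h '' Set.Iio n) D).ncard
      ≤ (decode '' goodLists).ncard := Set.ncard_le_ncard hsub (Set.toFinite _)
    _ ≤ goodLists.card := (Set.ncard_image_le (Set.toFinite _)).trans_eq (Set.ncard_coe_finset _)
    _ ≤ (List.range n).permutations'.countP P :=
        (List.toFinset_card_le _).trans_eq List.countP_eq_length_filter.symm

end LinearOrders

section CondorcetDomains

variable {α : Type*} {X : Set α} {D : Set (α → α → Prop)} {a b c : α}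

theorem IsAbundant.nonempty {k s : ℕ} (hs : s ≠ 0) (hk : k ≤ X.encard)
    (hD : IsAbundant X D k s) : D.Nonempty := by
  obtain ⟨A, hAX, hA⟩ := Set.exists_subset_encard_eq hk
  rw [Set.nonempty_iff_ne_empty]
  rintro rfl
  exact hs (by simpa [restrictDom] using hD A hAX (by rw [Set.ncard, hA, ENat.toNat_natCast]))

open Classical in
theorem majCount_three (p q s : α → α → Prop) (a b : α) :
    majCount [p, q, s] a b =
      (if p a b then 1 else 0) + (if q a b then 1 else 0) + (if s a b then 1 else 0) := by
  unfold majCount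
  rw [Nat.card_eq_fintype_card, Fintype.card_subtype, Finset.card_filter]
  refine (Fin.sum_univ_three _).trans ?_
  simp [List.get]

-- Three orders with these patterns would have a cyclic majority relation.
theorem IsCondorcetDomain.cyclic_pattern_missing (hD : IsCondorcetDomain X D)
    (ha : a ∈ X) (hb : b ∈ X) (hc : c ∈ X) :
    (∀ r ∈ D, ¬ (r a b ∧ r b c)) ∨ (∀ r ∈ D, ¬ (r b c ∧ r c a)) ∨ (∀ r ∈ D, ¬ (r c a ∧ r a b)) := by
  classical
  by_contra! ⟨⟨p, hp, hpab, hpbc⟩, ⟨q, hq, hqbc, hqca⟩, s, hs, hsca, hsab⟩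
  have htrans := hD.2 [p, q, s] (by simp [hp, hq, hs]) ⟨1, rfl⟩ a ha b hb c hc
  simp only [MajPrefers, majCount_three, hpab, hpbc, hqbc, hsab, (hD.1 q hq).asymm hqca,
    (hD.1 s hs).asymm hsca,
    if_true, if_false, List.length_cons, List.length_nil] at htrans
  have := htrans (by omega) (by omega)
  split_ifs at this <;> omega

open Classical in
theorem IsCondorcetDomain.exists_obeys (hD : IsCondorcetDomain X D) (ha : a ∈ X) (hb : b ∈ X)
    (hc : c ∈ X) (hab : a ≠ b) (hac : a ≠ c) (hbc : b ≠ c) :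
    ∃ nc ∈ List.range 3 ×ˢ List.range 3, ∀ r ∈ D,
      obeys (fun x y => decide (r x y)) [a, b, c] nc := by
  rcases hD.cyclic_pattern_missing ha hb hc with habc | hbca | hcab <;>
    rcases hD.cyclic_pattern_missing ha hc hb with hacb | hcba | hbac
  -- The missing patterns are the two in which the chosen alternative has the chosen position.
  on_goal 1 => use (0, 0)
  on_goal 2 => use (1, 1)
  on_goal 3 => use (2, 2)
  on_goal 4 => use (2, 1)
  on_goal 5 => use (0, 2)
  on_goal 6 => use (1, 0)
  on_goal 7 => use (1, 2)
  on_goal 8 => use (2, 0)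
  on_goal 9 => use (0, 1)
  all_goals
    refine ⟨by decide, fun r hr => ?_⟩
    have hlin := hD.1 r hr
    have hirrefl (x : α) : ¬ r x x := hlin.irrefl
    have hba := hlin.swap_iff_not ha hb hab
    have hca := hlin.swap_iff_not ha hc hac
    have hcb := hlin.swap_iff_not hb hc hbc
    simp only [obeys]
    grind

open Classical in
theorem IsCondorcetDomain.exists_neverConditions (hD : IsCondorcetDomain X D)
    {r₀ : α → α → Prop} (hr₀ : r₀ ∈ D) {n : ℕ} {e : ℕ → α} (heX : ∀ i < n, e i ∈ X)
    (he : ∀ i j, i < j → j < n → r₀ (e i) (e j)) :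
    ∃ f : List ℕ → NeverCondition, ∀ t ∈ triples n, f t ∈ neverConditions ∧
      ∀ r ∈ D, obeys (fun i j => decide (r (e i) (e j))) t (f t) := by
  suffices h : ∀ t ∈ triples n, ∃ nc ∈ neverConditions,
      ∀ r ∈ D, obeys (fun i j => decide (r (e i) (e j))) t nc by
    choose! f hf using h
    exact ⟨f, hf⟩
  intro t ht
  obtain ⟨i, j, k, hij, hjk, hkn, rfl⟩ := mem_triples.1 ht
  have hinj := (hD.1 r₀ hr₀).injOn_of_increasing he
  have hjn := hjk.trans hkn
  have hin := hij.trans hjn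
  obtain ⟨nc, hnc, hobeys⟩ := hD.exists_obeys (heX i hin) (heX j hjn) (heX k hkn)
    (hinj.ne hin hjn hij.ne) (hinj.ne hin hkn (hij.trans hjk).ne) (hinj.ne hjn hkn hjk.ne)
  have hobeys' (r) (hr : r ∈ D) : obeys (fun i j => decide (r (e i) (e j))) [i, j, k] nc := by
    rw [← obeys_map (fun x y => decide (r x y)) e]
    exact hobeys r hr
  refine ⟨nc, mem_neverConditions_of_obeys hij hjk hnc ?_, hobeys'⟩
  rw [← hobeys' r₀ hr₀]
  refine obeys_congr (fun a ha b hb => ?_) nc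
  exact decide_eq_decide.2 ((hD.1 r₀ hr₀).rel_iff_lt_of_increasing he
    (lt_of_mem_triples ht ha) (lt_of_mem_triples ht hb)).symm

open Classical in
theorem IsAbundant.le_countP {k s : ℕ} (hD : IsDomainOn X D) (habund : IsAbundant X D k s)
    {h : ℕ → α} (hX : Set.MapsTo h (Set.Iio k) X) (hinj : Set.InjOn h (Set.Iio k))
    {f : List ℕ → NeverCondition} (hobeys : ∀ t ∈ triples k, ∀ r ∈ D,
      obeys (fun i j => decide (r (h i) (h j))) t (f t)) :
    s ≤ (List.range k).permutations'.countP fun p =>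
      (triples k).all fun t => obeys (positionLT p) t (f t) := by
  have hcard : (h '' Set.Iio k).ncard = k := by rw [hinj.ncard_image, Set.ncard_Iio_nat]
  refine (habund _ hX.image_subset hcard).trans (ncard_restrictDom_le_countP fun r hr => ?_)
  obtain ⟨p, hp, hpr⟩ := (hD r hr).exists_positions hX hinj
  refine ⟨p, hp, List.all_eq_true.2 fun t ht => ?_, hpr⟩
  rw [← hobeys t ht r hr]
  refine obeys_congr (fun i hi j hj => ?_) _
  rw [Bool.eq_iff_iff, hpr i (lt_of_mem_triples ht hi) j (lt_of_mem_triples ht hj),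
    decide_eq_true_iff]

end CondorcetDomains

theorem no_five_nineteen_abundant_general {α : Type*} {X : Set α} (hX : 7 ≤ X.encard)
    {D : Set (α → α → Prop)} (hD : IsCondorcetDomain X D) :
    ∃ A : Set α, A ⊆ X ∧ A.ncard = 5 ∧ (restrictDom A D).ncard ≤ 18 := by
  by_contra! hrich
  have habund : IsAbundant X D 5 19 := hrich
  obtain ⟨r₀, hr₀⟩ := habund.nonempty (by norm_num) (le_trans (by norm_num) hX)
  obtain ⟨e, heX, he⟩ := (hD.1 r₀ hr₀).exists_increasing (n := 7) hX
  obtain ⟨f, hf⟩ := hD.exists_neverConditions hr₀ heX he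
  have hrestrict (A) (hA : A ∈ (List.range 7).sublistsLen 5) :
      (triples 5).map (fun s => (s, f (s.map (A.getD · 0)))) ∈ richAssignments 7 5 19 := by
    have hfA (s) (hs : s ∈ triples 5) := hf _ (map_getD_mem_triples hA hs)
    have hinj : Set.InjOn (fun i => e (A.getD i 0)) (Set.Iio 5) :=
      (hD.1 r₀ hr₀).injOn_of_increasing fun i j hij hj =>
        he _ _ (getD_lt_getD_of_mem_sublistsLen_range hA hij hj)
          (getD_lt_of_mem_sublistsLen_range hA hj)
    refine graph_mem_richAssignments (by decide) (fun s hs => (hfA s hs).1) ?_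
    refine habund.le_countP hD.1 (fun i hi => heX _ (getD_lt_of_mem_sublistsLen_range hA hi)) hinj
      fun s hs r hr => by simpa only [obeys_map] using (hfA s hs).2 r hr
  have hglued := graph_mem_gluedAssignments (fun t ht => (hf t ht).1) hrestrict
  rw [gluedAssignments_seven_five_eq_nil] at hglued
  exact List.not_mem_nil hglued

/-- For `n ≥ 7`, no Condorcet domain on an `n`-element set is `(5,19)`-abundant:
it has a 5-element subset whose restriction contains at most 18 orders. -/
theorem no_five_nineteen_abundant {α : Type*} (X : Set α) (hX : X.Finite)
    (hXcard : 7 ≤ X.ncard) (D : Set (α → α → Prop)) (hD : IsCondorcetDomain X D) :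
    ∃ A : Set α, A ⊆ X ∧ A.ncard = 5 ∧ (restrictDom A D).ncard ≤ 18 :=
  no_five_nineteen_abundant_general (by rw [← hX.cast_ncard_eq]; exact_mod_cast hXcard) hD
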